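/- arXiv:2205.03723 — 3 statements merged into one kernel-verified Lean document; each statement's English description precedes it below -/
import Mathlib

section
/- Let (A, ·, [·,·], ε, α) be a Hom-Poisson color Hom-algebra with an even derivation D (a derivation for both · and [·,·]) commuting with α. Define x ⋄ y = x·D(y). Then (A, ⋄, [·,·], ε, α) is a Hom-Gelfand-Dorfman color Hom-algebra. -/
open scoped TensorProduct

section ColorHomDefs

variable {K Γ A V : Type*} [Field K] [AddCommGroup Γ]
variable [AddCommGroup A] [Module K A] [AddCommGroup V] [Module K V]

/-- A commutation factor (skew-symmetric bicharacter) on `Γ` with values in `K`. -/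
def IsCommFactor (ε : Γ → Γ → K) : Prop :=
  (∀ a b, ε a b ≠ 0) ∧ (∀ a b, ε a b * ε b a = 1) ∧
    (∀ a b c, ε a (b + c) = ε a b * ε a c) ∧
    (∀ a b c, ε (a + b) c = ε a c * ε b c)

/-- The (even bilinear) product respects the grading. -/
def GradedMul (𝒜 : Γ → Submodule K A) (μ : A →ₗ[K] A →ₗ[K] A) : Prop :=
  ∀ ⦃γ₁ γ₂ : Γ⦄ ⦃x y : A⦄, x ∈ 𝒜 γ₁ → y ∈ 𝒜 γ₂ → μ x y ∈ 𝒜 (γ₁ + γ₂)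

/-- An even linear map. -/
def GradedEnd (𝒜 : Γ → Submodule K A) (f : A →ₗ[K] A) : Prop :=
  ∀ ⦃γ : Γ⦄ ⦃x : A⦄, x ∈ 𝒜 γ → f x ∈ 𝒜 γ

/-- ε-commutativity on homogeneous elements. -/
def IsEpsComm (𝒜 : Γ → Submodule K A) (ε : Γ → Γ → K) (μ : A →ₗ[K] A →ₗ[K] A) : Prop :=
  ∀ ⦃γ₁ γ₂ : Γ⦄ ⦃x y : A⦄, x ∈ 𝒜 γ₁ → y ∈ 𝒜 γ₂ → μ x y = ε γ₁ γ₂ • μ y x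

/-- Hom-associativity on homogeneous elements. -/
def IsHomAssoc (𝒜 : Γ → Submodule K A) (μ : A →ₗ[K] A →ₗ[K] A) (α : A →ₗ[K] A) : Prop :=
  ∀ ⦃γ₁ γ₂ γ₃ : Γ⦄ ⦃x y z : A⦄, x ∈ 𝒜 γ₁ → y ∈ 𝒜 γ₂ → z ∈ 𝒜 γ₃ →
    μ (μ x y) (α z) = μ (α x) (μ y z)

/-- The two defining identities of a Hom-Novikov color Hom-algebra. -/
def IsHomNovikov (𝒜 : Γ → Submodule K A) (ε : Γ → Γ → K) (μ : A →ₗ[K] A →ₗ[K] A)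
    (α : A →ₗ[K] A) : Prop :=
  (∀ ⦃γ₁ γ₂ γ₃ : Γ⦄ ⦃x y z : A⦄, x ∈ 𝒜 γ₁ → y ∈ 𝒜 γ₂ → z ∈ 𝒜 γ₃ →
      μ (μ x y) (α z) - μ (α x) (μ y z)
        = ε γ₁ γ₂ • (μ (μ y x) (α z) - μ (α y) (μ x z))) ∧
  (∀ ⦃γ₁ γ₂ γ₃ : Γ⦄ ⦃x y z : A⦄, x ∈ 𝒜 γ₁ → y ∈ 𝒜 γ₂ → z ∈ 𝒜 γ₃ →
      μ (μ x y) (α z) = ε γ₂ γ₃ • μ (μ x z) (α y))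

/-- ε-skew-symmetry and the ε-Hom-Jacobi identity for a bilinear bracket. -/
def IsHomLie (𝒜 : Γ → Submodule K A) (ε : Γ → Γ → K) (br : A →ₗ[K] A →ₗ[K] A)
    (α : A →ₗ[K] A) : Prop :=
  (∀ ⦃γ₁ γ₂ : Γ⦄ ⦃x y : A⦄, x ∈ 𝒜 γ₁ → y ∈ 𝒜 γ₂ → br x y = -(ε γ₁ γ₂ • br y x)) ∧
  (∀ ⦃γ₁ γ₂ γ₃ : Γ⦄ ⦃x y z : A⦄, x ∈ 𝒜 γ₁ → y ∈ 𝒜 γ₂ → z ∈ 𝒜 γ₃ →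
      ε γ₃ γ₁ • br (α x) (br y z) + ε γ₁ γ₂ • br (α y) (br z x)
        + ε γ₂ γ₃ • br (α z) (br x y) = 0)

/-- Compatibility conditions of a Hom-Novikov-Poisson color Hom-algebra. -/
def HNPCompat (𝒜 : Γ → Submodule K A) (ε : Γ → Γ → K) (μ d : A →ₗ[K] A →ₗ[K] A)
    (α : A →ₗ[K] A) : Prop :=
  (∀ ⦃γ₁ γ₂ γ₃ : Γ⦄ ⦃x y z : A⦄, x ∈ 𝒜 γ₁ → y ∈ 𝒜 γ₂ → z ∈ 𝒜 γ₃ →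
      d (μ x y) (α z) = ε γ₂ γ₃ • μ (d x z) (α y)) ∧
  (∀ ⦃γ₁ γ₂ γ₃ : Γ⦄ ⦃x y z : A⦄, x ∈ 𝒜 γ₁ → y ∈ 𝒜 γ₂ → z ∈ 𝒜 γ₃ →
      μ (d x y) (α z) - d (α x) (μ y z)
        = ε γ₁ γ₂ • (μ (d y x) (α z) - d (α y) (μ x z)))

/-- Hom-Novikov-Poisson color Hom-algebra: `μ` is the ε-commutative Hom-associative
product, `d` the Hom-Novikov product. -/
def IsHNP (𝒜 : Γ → Submodule K A) (ε : Γ → Γ → K) (μ d : A →ₗ[K] A →ₗ[K] A)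
    (α : A →ₗ[K] A) : Prop :=
  GradedMul 𝒜 μ ∧ GradedMul 𝒜 d ∧ GradedEnd 𝒜 α ∧
    IsEpsComm 𝒜 ε μ ∧ IsHomAssoc 𝒜 μ α ∧ IsHomNovikov 𝒜 ε d α ∧ HNPCompat 𝒜 ε μ d α

/-- Admissibility: the left Hom-associator mixing the two products vanishes. -/
def IsAdmissibleHNP (𝒜 : Γ → Submodule K A) (ε : Γ → Γ → K) (μ d : A →ₗ[K] A →ₗ[K] A)
    (α : A →ₗ[K] A) : Prop :=
  IsHNP 𝒜 ε μ d α ∧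
    ∀ ⦃γ₁ γ₂ γ₃ : Γ⦄ ⦃x y z : A⦄, x ∈ 𝒜 γ₁ → y ∈ 𝒜 γ₂ → z ∈ 𝒜 γ₃ →
      d (μ x y) (α z) = d (α x) (μ y z)

/-- Gelfand-Dorfman compatibility for a bilinear bracket. -/
def GDCompat (𝒜 : Γ → Submodule K A) (ε : Γ → Γ → K) (μ br : A →ₗ[K] A →ₗ[K] A)
    (α : A →ₗ[K] A) : Prop :=
  ∀ ⦃γ₁ γ₂ γ₃ : Γ⦄ ⦃x y z : A⦄, x ∈ 𝒜 γ₁ → y ∈ 𝒜 γ₂ → z ∈ 𝒜 γ₃ →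
    μ (α y) (br x z)
      = ε γ₂ γ₁ • br (α x) (μ y z) - ε (γ₁ + γ₂) γ₃ • br (α z) (μ y x)
        + μ (br y x) (α z) - ε γ₁ γ₃ • μ (br y z) (α x)

/-- The transposed Hom-ε-Leibniz identity. -/
def TransposedLeibniz (𝒜 : Γ → Submodule K A) (ε : Γ → Γ → K) (μ br : A →ₗ[K] A →ₗ[K] A)
    (α : A →ₗ[K] A) : Prop :=
  ∀ ⦃γ₁ γ₂ γ₃ : Γ⦄ ⦃x y z : A⦄, x ∈ 𝒜 γ₁ → y ∈ 𝒜 γ₂ → z ∈ 𝒜 γ₃ →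
    (2 : K) • μ (α z) (br x y) = br (μ z x) (α y) + ε γ₃ γ₁ • br (α x) (μ z y)

/-- The ε-commutator bracket of homogeneous elements of degrees `γ`, `δ`. -/
def brkt (ε : Γ → Γ → K) (μ : A →ₗ[K] A →ₗ[K] A) (γ δ : Γ) (x y : A) : A :=
  μ x y - ε γ δ • μ y x

/-- The Yau twist `x ∗ y = α (μ x y)` of a bilinear product. -/
def twistMul (α : A →ₗ[K] A) (μ : A →ₗ[K] A →ₗ[K] A) : A →ₗ[K] A →ₗ[K] A :=
  (LinearMap.llcomp K A A A α).comp μ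

/-- The product `x ⋄ y = μ x (D y)`. -/
def precompMul (D : A →ₗ[K] A) (μ : A →ₗ[K] A →ₗ[K] A) : A →ₗ[K] A →ₗ[K] A :=
  (LinearMap.lcomp K A D).comp μ

/-- Semidirect product of an ε-commutative Hom-associative color Hom-algebra with a
bimodule, on homogeneous elements of degrees `γ₁`, `γ₂`. -/
def sdDot (ε : Γ → Γ → K) (μ : A →ₗ[K] A →ₗ[K] A) (s : A →ₗ[K] V →ₗ[K] V)
    (γ₁ γ₂ : Γ) (X Y : A × V) : A × V :=
  (μ X.1 Y.1, s X.1 Y.2 + ε γ₁ γ₂ • s Y.1 X.2)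

/-- Semidirect product of a Hom-Novikov color Hom-algebra with a bimodule. -/
def sdDiam (μ : A →ₗ[K] A →ₗ[K] A) (l r : A →ₗ[K] V →ₗ[K] V) (X Y : A × V) : A × V :=
  (μ X.1 Y.1, l X.1 Y.2 + r Y.1 X.2)

/-- Semidirect product bracket of a Hom-Lie color Hom-algebra with a representation. -/
def sdBr (ε : Γ → Γ → K) (br : A →ₗ[K] A →ₗ[K] A) (ρ : A →ₗ[K] V →ₗ[K] V)
    (γ₁ γ₂ : Γ) (X Y : A × V) : A × V :=
  (br X.1 Y.1, ρ X.1 Y.2 - ε γ₁ γ₂ • ρ Y.1 X.2)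

/-- The twisting map `α ⊕ β` on `A × V`. -/
def sdEnd (α : A →ₗ[K] A) (β : V →ₗ[K] V) (X : A × V) : A × V := (α X.1, β X.2)

end ColorHomDefs

/-!
Write `x ⋄ y = x · D y`. By Hom-associativity and the Leibniz rule for `D`, the Hom-associator of
`⋄` at `(x, y, z)` is `-(x · y) · α (D (D z))`, which is ε-symmetric in `x` and `y`. Solved for
`α y · [x, w]`, the Hom-Leibniz identity reads
`α y · [x, w] = ε(y, x) [α x, y · w] + [y, x] · α w`.
The Gelfand-Dorfman identity expands `α y · D [x, z] = α y · [x, D z] + α y · [D x, z]` by two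
instances of it, at `(x, y, D z)` and, after ε-skew-symmetry, at `(z, y, D x)`.
-/

section HomPoissonDerivation

variable {K Γ A : Type*} [Field K] [AddCommGroup A] [Module K A]

/-- ε-skew-symmetry of a bracket on homogeneous elements: the first half of `IsHomLie`,
separated from the Hom-Jacobi identity. -/
def IsEpsSkew (𝒜 : Γ → Submodule K A) (ε : Γ → Γ → K) (br : A →ₗ[K] A →ₗ[K] A) : Prop :=
  ∀ ⦃γ₁ γ₂ : Γ⦄ ⦃x y : A⦄, x ∈ 𝒜 γ₁ → y ∈ 𝒜 γ₂ → br x y = -(ε γ₁ γ₂ • br y x)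

/-- `D` is a derivation of the bilinear product `μ`. No sign `ε` occurs because the derivations
considered here have degree `0`. -/
def IsDerivationOf (D : A →ₗ[K] A) (μ : A →ₗ[K] A →ₗ[K] A) : Prop :=
  ∀ x y : A, D (μ x y) = μ (D x) y + μ x (D y)

variable {𝒜 : Γ → Submodule K A} {ε : Γ → Γ → K} {μ br : A →ₗ[K] A →ₗ[K] A} {α D : A →ₗ[K] A}
variable {γ₁ γ₂ γ₃ : Γ} {x y z : A}

theorem precompMul_apply (D : A →ₗ[K] A) (μ : A →ₗ[K] A →ₗ[K] A) (x y : A) :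
    precompMul D μ x y = μ x (D y) :=
  rfl

theorem IsHomAssoc.mul_right_comm (hassoc : IsHomAssoc 𝒜 μ α) (hcomm : IsEpsComm 𝒜 ε μ)
    (hx : x ∈ 𝒜 γ₁) (hy : y ∈ 𝒜 γ₂) (hz : z ∈ 𝒜 γ₃) :
    μ (μ x y) (α z) = ε γ₂ γ₃ • μ (μ x z) (α y) := by
  rw [hassoc hx hy hz, hcomm hy hz, map_smul, ← hassoc hx hz hy]

theorem homAssociator_precompMul (hassoc : IsHomAssoc 𝒜 μ α) (hD : GradedEnd 𝒜 D)
    (hDμ : IsDerivationOf D μ) (hDα : Function.Commute α D)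
    (hx : x ∈ 𝒜 γ₁) (hy : y ∈ 𝒜 γ₂) (hz : z ∈ 𝒜 γ₃) :
    precompMul D μ (precompMul D μ x y) (α z) - precompMul D μ (α x) (precompMul D μ y z)
      = -μ (μ x y) (α (D (D z))) := by
  simp only [precompMul_apply]
  rw [← hDα z, hDμ, map_add, hassoc hx (hD hy) (hD hz), hassoc hx hy (hD (hD hz))]
  abel

theorem isHomNovikov_precompMul (hcomm : IsEpsComm 𝒜 ε μ) (hassoc : IsHomAssoc 𝒜 μ α)
    (hD : GradedEnd 𝒜 D) (hDμ : IsDerivationOf D μ) (hDα : Function.Commute α D) :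
    IsHomNovikov 𝒜 ε (precompMul D μ) α := by
  constructor
  · intro γ₁ γ₂ γ₃ x y z hx hy hz
    rw [homAssociator_precompMul hassoc hD hDμ hDα hx hy hz,
      homAssociator_precompMul hassoc hD hDμ hDα hy hx hz,
      hcomm hx hy, map_smul, LinearMap.smul_apply, smul_neg]
  · intro γ₁ γ₂ γ₃ x y z hx hy hz
    simp only [precompMul_apply]
    rw [← hDα y, ← hDα z]
    exact hassoc.mul_right_comm hcomm hx (hD hy) (hD hz)

variable [AddCommGroup Γ]

theorem gradedMul_precompMul (hμ : GradedMul 𝒜 μ) (hD : GradedEnd 𝒜 D) :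
    GradedMul 𝒜 (precompMul D μ) :=
  fun _ _ _ _ hx hy => hμ hx (hD hy)

/-- The ε-Hom-Leibniz identity of a Hom-Poisson color Hom-algebra. In its last term the
ε-commutative product is written with `α z` on the left, hence the factor `ε (γ₁ + γ₂) γ₃`. -/
def IsHomLeibniz (𝒜 : Γ → Submodule K A) (ε : Γ → Γ → K) (μ br : A →ₗ[K] A →ₗ[K] A)
    (α : A →ₗ[K] A) : Prop :=
  ∀ ⦃γ₁ γ₂ γ₃ : Γ⦄ ⦃x y z : A⦄, x ∈ 𝒜 γ₁ → y ∈ 𝒜 γ₂ → z ∈ 𝒜 γ₃ →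
    br (α x) (μ y z)
      = ε γ₁ γ₂ • μ (α y) (br x z) + ε (γ₁ + γ₂) γ₃ • μ (α z) (br x y)

theorem IsCommFactor.smul_smul_swap (hε : IsCommFactor ε) (a b : Γ) (v : A) :
    ε a b • ε b a • v = v := by
  rw [smul_smul, hε.2.1, one_smul]

theorem IsHomLeibniz.mul_bracket_eq (hLeibniz : IsHomLeibniz 𝒜 ε μ br α) (hε : IsCommFactor ε)
    (hbr : GradedMul 𝒜 br) (hα : GradedEnd 𝒜 α) (hcomm : IsEpsComm 𝒜 ε μ)
    (hskew : IsEpsSkew 𝒜 ε br) (hx : x ∈ 𝒜 γ₁) (hy : y ∈ 𝒜 γ₂) (hz : z ∈ 𝒜 γ₃) :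
    μ (α y) (br x z) = ε γ₂ γ₁ • br (α x) (μ y z) + μ (br y x) (α z) := by
  have hleft : ε γ₂ γ₁ • br (α x) (μ y z)
      = μ (α y) (br x z) + ε γ₂ γ₁ • ε (γ₁ + γ₂) γ₃ • μ (α z) (br x y) := by
    rw [hLeibniz hx hy hz, smul_add, hε.smul_smul_swap]
  have hright : μ (br y x) (α z) = -(ε γ₂ γ₁ • ε (γ₁ + γ₂) γ₃ • μ (α z) (br x y)) := by
    rw [hcomm (hbr hy hx) (hα hz), hskew hy hx, map_neg, map_smul, smul_neg, smul_comm,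
      add_comm γ₂ γ₁]
  rw [hleft, hright, add_neg_cancel_right]

theorem gdCompat_precompMul (hε : IsCommFactor ε) (hbr : GradedMul 𝒜 br) (hα : GradedEnd 𝒜 α)
    (hcomm : IsEpsComm 𝒜 ε μ) (hskew : IsEpsSkew 𝒜 ε br) (hLeibniz : IsHomLeibniz 𝒜 ε μ br α)
    (hD : GradedEnd 𝒜 D) (hDbr : IsDerivationOf D br) (hDα : Function.Commute α D) :
    GDCompat 𝒜 ε (precompMul D μ) br α := by
  intro γ₁ γ₂ γ₃ x y z hx hy hz
  have hDz : μ (α y) (br x (D z))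
      = ε γ₂ γ₁ • br (α x) (μ y (D z)) + μ (br y x) (D (α z)) := by
    rw [← hDα z]
    exact hLeibniz.mul_bracket_eq hε hbr hα hcomm hskew hx hy (hD hz)
  have hDx : μ (α y) (br (D x) z)
      = -(ε (γ₁ + γ₂) γ₃ • br (α z) (μ y (D x)) + ε γ₁ γ₃ • μ (br y z) (D (α x))) := by
    rw [hskew (hD hx) hz, map_neg, map_smul,
      hLeibniz.mul_bracket_eq hε hbr hα hcomm hskew hz hy (hD hx), smul_add, smul_smul,
      ← hε.2.2.2, hDα x]
  simp only [precompMul_apply]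
  rw [hDbr, map_add, hDz, hDx]
  abel

end HomPoissonDerivation

/-- a Hom-Poisson color Hom-algebra with an even derivation `D` of
both products, commuting with `α`, yields a Hom-Gelfand-Dorfman color Hom-algebra
with the product `x ⋄ y = x · D(y)`. -/
theorem homPoisson_derivation_to_homGelfandDorfman
    {K Γ A : Type*} [Field K] [AddCommGroup Γ] [AddCommGroup A] [Module K A]
    (𝒜 : Γ → Submodule K A) (ε : Γ → Γ → K)
    (μ br : A →ₗ[K] A →ₗ[K] A) (α D : A →ₗ[K] A)
    (hε : IsCommFactor ε) (hμ : GradedMul 𝒜 μ) (hbr : GradedMul 𝒜 br)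
    (hα : GradedEnd 𝒜 α)
    (hcomm : IsEpsComm 𝒜 ε μ) (hassoc : IsHomAssoc 𝒜 μ α)
    (hLie : IsHomLie 𝒜 ε br α)
    (hLeibniz : ∀ ⦃γ₁ γ₂ γ₃ : Γ⦄ ⦃x y z : A⦄, x ∈ 𝒜 γ₁ → y ∈ 𝒜 γ₂ → z ∈ 𝒜 γ₃ →
      br (α x) (μ y z)
        = ε γ₁ γ₂ • μ (α y) (br x z) + ε (γ₁ + γ₂) γ₃ • μ (α z) (br x y))
    (hD : GradedEnd 𝒜 D)
    (hDμ : ∀ x y : A, D (μ x y) = μ (D x) y + μ x (D y))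
    (hDbr : ∀ x y : A, D (br x y) = br (D x) y + br x (D y))
    (hDα : ∀ x : A, α (D x) = D (α x)) :
    GradedMul 𝒜 (precompMul D μ) ∧
    IsHomNovikov 𝒜 ε (precompMul D μ) α ∧
    IsHomLie 𝒜 ε br α ∧
    GDCompat 𝒜 ε (precompMul D μ) br α := by
  exact ⟨gradedMul_precompMul hμ hD, isHomNovikov_precompMul hcomm hassoc hD hDμ hDα, hLie,
    gdCompat_precompMul hε hbr hα hcomm hLie.1 hLeibniz hD hDbr hDα⟩
end

section
/- If (A, ·, ⋄, ε, α) is a Hom-Novikov-Poisson color Hom-algebra, then (A, ·, [·,·], ε, α) with [x,y] = x⋄y − ε(x,y)y⋄x is a Hom-Gelfand-Dorfman color Hom-algebra. -/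
open scoped TensorProduct

/-!
Write `x · y` for `μ x y` and `x ⋄ y` for `d x y`. The cyclic sum of iterated `ε`-commutators of any
product is a combination of `ε`-skew-symmetrized Hom-associators, so left-symmetry of `⋄` gives the
Hom-Jacobi identity.

For the Gelfand-Dorfman identity, the compatibility conditions turn both sides into
`ε(y,x) α(x) ⋄ (y · z) - ε(x+y,z) α(z) ⋄ (y · x)`. On the right-hand side, the terms
`(y ⋄ x) · α(z)` and `(y ⋄ z) · α(x)` of `[α(x), y · z]` and `[α(z), y · x]` cancel against those of
`[y, x] · α(z)` and `[y, z] · α(x)`; the remaining terms of the latter two cancel each other because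
`(x ⋄ y) · α(z)` is `ε`-symmetric in `x` and `z`.
-/

section HomGelfandDorfman

variable {K Γ A : Type*} [Field K] [AddCommGroup A] [Module K A]
variable {𝒜 : Γ → Submodule K A} {ε : Γ → Γ → K} {μ d : A →ₗ[K] A →ₗ[K] A} {α : A →ₗ[K] A}
variable {a b c : Γ} {x y z : A}

/-- The Hom-associator `(xy)α(z) - α(x)(yz)`, measuring the failure of Hom-associativity. -/
def homAssociator (μ : A →ₗ[K] A →ₗ[K] A) (α : A →ₗ[K] A) (x y z : A) : A :=
  μ (μ x y) (α z) - μ (α x) (μ y z)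

/-- A left-symmetric (pre-Lie) color Hom-algebra: on homogeneous elements, the Hom-associator is
`ε`-symmetric in its first two arguments. This is the first of the two identities in
`IsHomNovikov`. -/
def IsHomLeftSymmetric (𝒜 : Γ → Submodule K A) (ε : Γ → Γ → K) (μ : A →ₗ[K] A →ₗ[K] A)
    (α : A →ₗ[K] A) : Prop :=
  ∀ ⦃γ₁ γ₂ γ₃ : Γ⦄ ⦃x y z : A⦄, x ∈ 𝒜 γ₁ → y ∈ 𝒜 γ₂ → z ∈ 𝒜 γ₃ →
    homAssociator μ α x y z = ε γ₁ γ₂ • homAssociator μ α y x z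

theorem IsHomNovikov.isHomLeftSymmetric (h : IsHomNovikov 𝒜 ε μ α) :
    IsHomLeftSymmetric 𝒜 ε μ α :=
  h.1

theorem IsHomAssoc.homAssociator_eq_zero (h : IsHomAssoc 𝒜 μ α) (hx : x ∈ 𝒜 a) (hy : y ∈ 𝒜 b)
    (hz : z ∈ 𝒜 c) : homAssociator μ α x y z = 0 :=
  sub_eq_zero.2 (h hx hy hz)

theorem IsHomAssoc.isHomLeftSymmetric (h : IsHomAssoc 𝒜 μ α) : IsHomLeftSymmetric 𝒜 ε μ α := by
  intro _ _ _ x y z hx hy hz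
  rw [h.homAssociator_eq_zero hx hy hz, h.homAssociator_eq_zero hy hx hz, smul_zero]

theorem IsHomAssoc.isHomNovikov (h : IsHomAssoc 𝒜 μ α) (hμ : IsEpsComm 𝒜 ε μ) :
    IsHomNovikov 𝒜 ε μ α := by
  refine ⟨h.isHomLeftSymmetric, fun _ γ₂ γ₃ x y z hx hy hz => ?_⟩
  calc μ (μ x y) (α z) = μ (α x) (μ y z) := h hx hy hz
    _ = ε γ₂ γ₃ • μ (α x) (μ z y) := by rw [hμ hy hz, map_smul]
    _ = ε γ₂ γ₃ • μ (μ x z) (α y) := by rw [h hx hz hy]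

theorem HNPCompat.brkt_mul (h : HNPCompat 𝒜 ε μ d α) (hx : x ∈ 𝒜 a) (hy : y ∈ 𝒜 b) (hz : z ∈ 𝒜 c) :
    μ (brkt ε d a b x y) (α z) = d (α x) (μ y z) - ε a b • d (α y) (μ x z) := by
  rw [brkt, map_sub, map_smul, LinearMap.sub_apply, LinearMap.smul_apply]
  linear_combination (norm := module) h.2 hx hy hz

variable [AddCommGroup Γ]

namespace IsCommFactor

theorem mul_swap (hε : IsCommFactor ε) (a b : Γ) : ε a b * ε b a = 1 :=
  hε.2.1 a b

theorem add_right (hε : IsCommFactor ε) (a b c : Γ) : ε a (b + c) = ε a b * ε a c :=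
  hε.2.2.1 a b c

theorem add_left (hε : IsCommFactor ε) (a b c : Γ) : ε (a + b) c = ε a c * ε b c :=
  hε.2.2.2 a b c

theorem swap_mul_add_right (hε : IsCommFactor ε) (a b c : Γ) :
    ε c a * ε a (b + c) = ε a b := by
  rw [hε.add_right, mul_left_comm, hε.mul_swap, mul_one]

end IsCommFactor

theorem brkt_skew (hε : IsCommFactor ε) (μ : A →ₗ[K] A →ₗ[K] A) (a b : Γ) (x y : A) :
    brkt ε μ a b x y = -(ε a b • brkt ε μ b a y x) := by
  simp only [brkt, smul_sub, smul_smul, hε.mul_swap, one_smul, neg_sub]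

theorem smul_brkt_brkt (hε : IsCommFactor ε) (μ : A →ₗ[K] A →ₗ[K] A) (a b c : Γ) (u y z : A) :
    ε c a • brkt ε μ a (b + c) u (brkt ε μ b c y z)
      = ε c a • (μ u (μ y z) - ε b c • μ u (μ z y))
        - ε a b • (μ (μ y z) u - ε b c • μ (μ z y) u) := by
  rw [← hε.swap_mul_add_right a b c]
  simp only [brkt, map_sub, map_smul, LinearMap.sub_apply, LinearMap.smul_apply, smul_sub,
    smul_smul, mul_assoc]

/-- The color form of the Hom-Akivis identity. -/
theorem homJacobi_brkt_eq_homAssociator (hε : IsCommFactor ε) (μ : A →ₗ[K] A →ₗ[K] A)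
    (α : A →ₗ[K] A) (a b c : Γ) (x y z : A) :
    ε c a • brkt ε μ a (b + c) (α x) (brkt ε μ b c y z)
        + ε a b • brkt ε μ b (c + a) (α y) (brkt ε μ c a z x)
        + ε b c • brkt ε μ c (a + b) (α z) (brkt ε μ a b x y)
      = -(ε c a • (homAssociator μ α x y z - ε a b • homAssociator μ α y x z)
        + ε a b • (homAssociator μ α y z x - ε b c • homAssociator μ α z y x)
        + ε b c • (homAssociator μ α z x y - ε c a • homAssociator μ α x z y)) := by
  simp only [smul_brkt_brkt hε, homAssociator]
  module

theorem IsHomLeftSymmetric.homJacobi_brkt (h : IsHomLeftSymmetric 𝒜 ε μ α)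
    (hε : IsCommFactor ε) (hx : x ∈ 𝒜 a) (hy : y ∈ 𝒜 b) (hz : z ∈ 𝒜 c) :
    ε c a • brkt ε μ a (b + c) (α x) (brkt ε μ b c y z)
      + ε a b • brkt ε μ b (c + a) (α y) (brkt ε μ c a z x)
      + ε b c • brkt ε μ c (a + b) (α z) (brkt ε μ a b x y) = 0 := by
  rw [homJacobi_brkt_eq_homAssociator hε, sub_eq_zero.2 (h hx hy hz), sub_eq_zero.2 (h hy hz hx),
    sub_eq_zero.2 (h hz hx hy)]
  simp only [smul_zero, add_zero, neg_zero]

namespace HNPCompat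

theorem diam_mul_eq_mul_diam (h : HNPCompat 𝒜 ε μ d α) (hε : IsCommFactor ε) (hx : x ∈ 𝒜 a)
    (hy : y ∈ 𝒜 b) (hz : z ∈ 𝒜 c) :
    μ (d x y) (α z) = ε b c • d (μ x z) (α y) := by
  rw [h.1 hx hz hy, smul_smul, hε.mul_swap, one_smul]

theorem diam_mul_swap (h : HNPCompat 𝒜 ε μ d α) (hε : IsCommFactor ε) (hμ : IsEpsComm 𝒜 ε μ)
    (hx : x ∈ 𝒜 a) (hy : y ∈ 𝒜 b) (hz : z ∈ 𝒜 c) :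
    ε b a • μ (d x y) (α z) = ε (a + b) c • μ (d z y) (α x) := by
  calc ε b a • μ (d x y) (α z)
      = (ε b a * ε b c) • d (μ x z) (α y) := by
        rw [h.diam_mul_eq_mul_diam hε hx hy hz, smul_smul]
    _ = (ε b a * ε b c * ε a c) • d (μ z x) (α y) := by
        rw [hμ hx hz, map_smul, LinearMap.smul_apply, smul_smul]
    _ = (ε a c * ε b c) • ε b a • d (μ z x) (α y) := by
        rw [smul_smul]
        congr 1
        ring
    _ = ε (a + b) c • μ (d z y) (α x) := by
        rw [← h.diam_mul_eq_mul_diam hε hz hy hx, hε.add_left]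

theorem smul_brkt_mul (h : HNPCompat 𝒜 ε μ d α) (hε : IsCommFactor ε) (hx : x ∈ 𝒜 a)
    (hy : y ∈ 𝒜 b) (hz : z ∈ 𝒜 c) :
    ε b a • brkt ε d a (b + c) (α x) (μ y z)
      = ε b a • d (α x) (μ y z) - μ (d y x) (α z) := by
  have hcoeff : ε b a * ε a (b + c) * ε c a = 1 := by
    rw [mul_assoc, mul_comm (ε a _), hε.swap_mul_add_right, hε.mul_swap]
  rw [brkt, h.1 hy hz hx, smul_sub, smul_smul, smul_smul, hcoeff, one_smul]

theorem mul_brkt (h : HNPCompat 𝒜 ε μ d α) (hε : IsCommFactor ε) (hd : GradedMul 𝒜 d)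
    (hα : GradedEnd 𝒜 α) (hμ : IsEpsComm 𝒜 ε μ) (hx : x ∈ 𝒜 a) (hy : y ∈ 𝒜 b) (hz : z ∈ 𝒜 c) :
    μ (α y) (brkt ε d a c x z)
      = ε b a • d (α x) (μ y z) - ε (a + b) c • d (α z) (μ y x) := by
  have hbrkt : brkt ε d a c x z ∈ 𝒜 (a + c) :=
    sub_mem (hd hx hz) (Submodule.smul_mem _ _ (add_comm c a ▸ hd hz hx))
  calc μ (α y) (brkt ε d a c x z)
      = ε b (a + c) • (d (α x) (μ z y) - ε a c • d (α z) (μ x y)) := by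
        rw [hμ (hα hy) hbrkt, h.brkt_mul hx hz hy]
    _ = ε b a • d (α x) (μ y z) - ε (a + b) c • d (α z) (μ y x) := by
        rw [hμ hy hz, hμ hy hx, hε.add_left, hε.add_right, map_smul, map_smul]
        module

theorem gelfandDorfman_brkt (h : HNPCompat 𝒜 ε μ d α) (hε : IsCommFactor ε)
    (hd : GradedMul 𝒜 d) (hα : GradedEnd 𝒜 α) (hμ : IsEpsComm 𝒜 ε μ)
    (hx : x ∈ 𝒜 a) (hy : y ∈ 𝒜 b) (hz : z ∈ 𝒜 c) :
    μ (α y) (brkt ε d a c x z)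
      = ε b a • brkt ε d a (b + c) (α x) (μ y z)
        - ε (a + b) c • brkt ε d c (b + a) (α z) (μ y x)
        + μ (brkt ε d b a y x) (α z)
        - ε a c • μ (brkt ε d b c y z) (α x) := by
  have hbrkt_mul : ε (a + b) c • brkt ε d c (b + a) (α z) (μ y x)
      = ε (a + b) c • d (α z) (μ y x) - ε a c • μ (d y z) (α x) := by
    rw [hε.add_left, mul_smul, h.smul_brkt_mul hε hz hy hx, smul_sub, mul_smul]
  have hswap := h.diam_mul_swap hε hμ hx hy hz
  rw [hε.add_left a b c] at hswap
  rw [h.mul_brkt hε hd hα hμ hx hy hz, h.smul_brkt_mul hε hx hy hz, hbrkt_mul, brkt, brkt]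
  simp only [map_sub, map_smul, LinearMap.sub_apply, LinearMap.smul_apply]
  linear_combination (norm := module) hswap

end HNPCompat

end HomGelfandDorfman

theorem homNovikovPoisson_to_homGelfandDorfman_general
    {K Γ A : Type*} [Field K] [AddCommGroup Γ] [AddCommGroup A] [Module K A]
    (𝒜 : Γ → Submodule K A) (ε : Γ → Γ → K)
    (μ d : A →ₗ[K] A →ₗ[K] A) (α : A →ₗ[K] A)
    (hε : IsCommFactor ε) (hd : GradedMul 𝒜 d) (hα : GradedEnd 𝒜 α)
    (hμ : IsEpsComm 𝒜 ε μ) (hassoc : IsHomAssoc 𝒜 μ α) (hsymm : IsHomLeftSymmetric 𝒜 ε d α)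
    (hcompat : HNPCompat 𝒜 ε μ d α) :
    IsHomNovikov 𝒜 ε μ α ∧
    (∀ ⦃γ₁ γ₂ : Γ⦄ ⦃x y : A⦄, x ∈ 𝒜 γ₁ → y ∈ 𝒜 γ₂ →
        brkt ε d γ₁ γ₂ x y = -(ε γ₁ γ₂ • brkt ε d γ₂ γ₁ y x)) ∧
    (∀ ⦃γ₁ γ₂ γ₃ : Γ⦄ ⦃x y z : A⦄, x ∈ 𝒜 γ₁ → y ∈ 𝒜 γ₂ → z ∈ 𝒜 γ₃ →
        ε γ₃ γ₁ • brkt ε d γ₁ (γ₂ + γ₃) (α x) (brkt ε d γ₂ γ₃ y z)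
          + ε γ₁ γ₂ • brkt ε d γ₂ (γ₃ + γ₁) (α y) (brkt ε d γ₃ γ₁ z x)
          + ε γ₂ γ₃ • brkt ε d γ₃ (γ₁ + γ₂) (α z) (brkt ε d γ₁ γ₂ x y) = 0) ∧
    (∀ ⦃γ₁ γ₂ γ₃ : Γ⦄ ⦃x y z : A⦄, x ∈ 𝒜 γ₁ → y ∈ 𝒜 γ₂ → z ∈ 𝒜 γ₃ →
        μ (α y) (brkt ε d γ₁ γ₃ x z)
          = ε γ₂ γ₁ • brkt ε d γ₁ (γ₂ + γ₃) (α x) (μ y z)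
            - ε (γ₁ + γ₂) γ₃ • brkt ε d γ₃ (γ₂ + γ₁) (α z) (μ y x)
            + μ (brkt ε d γ₂ γ₁ y x) (α z)
            - ε γ₁ γ₃ • μ (brkt ε d γ₂ γ₃ y z) (α x)) :=
  ⟨hassoc.isHomNovikov hμ,
    fun γ₁ γ₂ x y _ _ => brkt_skew hε d γ₁ γ₂ x y,
    fun _ _ _ _ _ _ hx hy hz => hsymm.homJacobi_brkt hε hx hy hz,
    fun _ _ _ _ _ _ hx hy hz => hcompat.gelfandDorfman_brkt hε hd hα hμ hx hy hz⟩

/-- a Hom-Novikov-Poisson color Hom-algebra together with the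
ε-commutator of its Novikov product is a Hom-Gelfand-Dorfman color Hom-algebra. -/
theorem homNovikovPoisson_to_homGelfandDorfman
    {K Γ A : Type*} [Field K] [AddCommGroup Γ] [AddCommGroup A] [Module K A]
    (𝒜 : Γ → Submodule K A) (ε : Γ → Γ → K)
    (μ d : A →ₗ[K] A →ₗ[K] A) (α : A →ₗ[K] A)
    (hε : IsCommFactor ε) (hHNP : IsHNP 𝒜 ε μ d α) :
    IsHomNovikov 𝒜 ε μ α ∧
    (∀ ⦃γ₁ γ₂ : Γ⦄ ⦃x y : A⦄, x ∈ 𝒜 γ₁ → y ∈ 𝒜 γ₂ →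
        brkt ε d γ₁ γ₂ x y = -(ε γ₁ γ₂ • brkt ε d γ₂ γ₁ y x)) ∧
    (∀ ⦃γ₁ γ₂ γ₃ : Γ⦄ ⦃x y z : A⦄, x ∈ 𝒜 γ₁ → y ∈ 𝒜 γ₂ → z ∈ 𝒜 γ₃ →
        ε γ₃ γ₁ • brkt ε d γ₁ (γ₂ + γ₃) (α x) (brkt ε d γ₂ γ₃ y z)
          + ε γ₁ γ₂ • brkt ε d γ₂ (γ₃ + γ₁) (α y) (brkt ε d γ₃ γ₁ z x)
          + ε γ₂ γ₃ • brkt ε d γ₃ (γ₁ + γ₂) (α z) (brkt ε d γ₁ γ₂ x y) = 0) ∧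
    (∀ ⦃γ₁ γ₂ γ₃ : Γ⦄ ⦃x y z : A⦄, x ∈ 𝒜 γ₁ → y ∈ 𝒜 γ₂ → z ∈ 𝒜 γ₃ →
        μ (α y) (brkt ε d γ₁ γ₃ x z)
          = ε γ₂ γ₁ • brkt ε d γ₁ (γ₂ + γ₃) (α x) (μ y z)
            - ε (γ₁ + γ₂) γ₃ • brkt ε d γ₃ (γ₂ + γ₁) (α z) (μ y x)
            + μ (brkt ε d γ₂ γ₁ y x) (α z)
            - ε γ₁ γ₃ • μ (brkt ε d γ₂ γ₃ y z) (α x)) := by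
  obtain ⟨_, hd, hα, hμ, hassoc, hnov, hcompat⟩ := hHNP
  exact homNovikovPoisson_to_homGelfandDorfman_general 𝒜 ε μ d α hε hd hα hμ hassoc
    hnov.isHomLeftSymmetric hcompat
end

section
/- If (A, ·, [·,·], ε) is a Gelfand-Dorfman color algebra and α: A → A is a morphism preserving both operations, then the Yau twist (A, ·_α, [·,·]_α, ε, α) with x·_α y = α(x·y) and [x,y]_α = α([x,y]) is a Hom-Gelfand-Dorfman color Hom-algebra. Moreover, if f: A → A' is a morphism of Gelfand-Dorfman color algebras with f∘α = α'∘f for a morphism α' of A', then f: A_α → A'_{α'} is a morphism of the Yau twists. -/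
open scoped TensorProduct

/-!
When `β` is multiplicative, `β (μ (β (ν x y)) (β z)) = β (β (μ (ν x y) z))`. Hence each identity
that is quadratic in the products holds for the twisted products because it is the image under
`β ∘ β` of the same identity for the original ones; skew-symmetry, linear in the bracket, is
transported by a single `β`. This works over any initial twisting map `α`, with new twisting map
`β ∘ α`; the untwisted case is `α = id`.
-/

section YauTwist

variable {K Γ A A' : Type*} [Field K] [AddCommGroup A] [Module K A] [AddCommGroup A'] [Module K A']

theorem twistMul_apply (β : A →ₗ[K] A) (μ : A →ₗ[K] A →ₗ[K] A) (x y : A) :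
    twistMul β μ x y = β (μ x y) :=
  rfl

theorem map_twistMul {μ : A →ₗ[K] A →ₗ[K] A} {β : A →ₗ[K] A} {μ' : A' →ₗ[K] A' →ₗ[K] A'}
    {β' : A' →ₗ[K] A'} {f : A →ₗ[K] A'} (hfμ : ∀ x y, f (μ x y) = μ' (f x) (f y))
    (hfβ : ∀ x, f (β x) = β' (f x)) (x y : A) :
    f (twistMul β μ x y) = twistMul β' μ' (f x) (f y) := by
  rw [twistMul_apply, twistMul_apply, hfβ, hfμ]

variable {𝒜 : Γ → Submodule K A} {ε : Γ → Γ → K} {μ br : A →ₗ[K] A →ₗ[K] A}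
  {α β : A →ₗ[K] A}

protected theorem IsHomNovikov.twistMul (hμ : IsHomNovikov 𝒜 ε μ α)
    (hβμ : ∀ x y, β (μ x y) = μ (β x) (β y)) :
    IsHomNovikov 𝒜 ε (twistMul β μ) (β ∘ₗ α) := by
  obtain ⟨left_symm, right_comm⟩ := hμ
  refine ⟨fun _ _ _ _ _ _ hx hy hz ↦ ?_, fun _ _ _ _ _ _ hx hy hz ↦ ?_⟩
  · simpa only [twistMul_apply, LinearMap.comp_apply, ← hβμ, map_sub, map_smul]
      using congrArg (β ∘ₗ β) (left_symm hx hy hz)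
  · simpa only [twistMul_apply, LinearMap.comp_apply, ← hβμ, map_smul]
      using congrArg (β ∘ₗ β) (right_comm hx hy hz)

protected theorem IsHomLie.twistMul (hbr : IsHomLie 𝒜 ε br α)
    (hβbr : ∀ x y, β (br x y) = br (β x) (β y)) :
    IsHomLie 𝒜 ε (twistMul β br) (β ∘ₗ α) := by
  obtain ⟨skew, jacobi⟩ := hbr
  refine ⟨fun _ _ _ _ hx hy ↦ ?_, fun _ _ _ _ _ _ hx hy hz ↦ ?_⟩
  · simpa only [twistMul_apply, map_neg, map_smul] using congrArg β (skew hx hy)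
  · simpa only [twistMul_apply, LinearMap.comp_apply, ← hβbr, map_add, map_smul, map_zero]
      using congrArg (β ∘ₗ β) (jacobi hx hy hz)

variable [AddCommGroup Γ]

protected theorem GradedMul.twistMul (hμ : GradedMul 𝒜 μ) (hβ : GradedEnd 𝒜 β) :
    GradedMul 𝒜 (twistMul β μ) :=
  fun _ _ _ _ hx hy ↦ hβ (hμ hx hy)

protected theorem GDCompat.twistMul (h : GDCompat 𝒜 ε μ br α)
    (hβμ : ∀ x y, β (μ x y) = μ (β x) (β y)) (hβbr : ∀ x y, β (br x y) = br (β x) (β y)) :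
    GDCompat 𝒜 ε (twistMul β μ) (twistMul β br) (β ∘ₗ α) := by
  intro _ _ _ _ _ _ hx hy hz
  simpa only [twistMul_apply, LinearMap.comp_apply, ← hβμ, ← hβbr, map_add, map_sub, map_smul]
    using congrArg (β ∘ₗ β) (h hx hy hz)

theorem yauTwist_gelfandDorfman_general {μ' br' : A' →ₗ[K] A' →ₗ[K] A'} {β' : A' →ₗ[K] A'}
    {f : A →ₗ[K] A'} (hμ : GradedMul 𝒜 μ) (hbr : GradedMul 𝒜 br)
    (hNov : IsHomNovikov 𝒜 ε μ α) (hLie : IsHomLie 𝒜 ε br α) (hGD : GDCompat 𝒜 ε μ br α)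
    (hβ : GradedEnd 𝒜 β) (hβμ : ∀ x y, β (μ x y) = μ (β x) (β y))
    (hβbr : ∀ x y, β (br x y) = br (β x) (β y)) (hfμ : ∀ x y, f (μ x y) = μ' (f x) (f y))
    (hfbr : ∀ x y, f (br x y) = br' (f x) (f y)) (hfβ : ∀ x, f (β x) = β' (f x)) :
    (GradedMul 𝒜 (twistMul β μ) ∧ GradedMul 𝒜 (twistMul β br) ∧
      IsHomNovikov 𝒜 ε (twistMul β μ) (β ∘ₗ α) ∧
      IsHomLie 𝒜 ε (twistMul β br) (β ∘ₗ α) ∧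
      GDCompat 𝒜 ε (twistMul β μ) (twistMul β br) (β ∘ₗ α)) ∧
    (∀ x y,
      f (twistMul β μ x y) = twistMul β' μ' (f x) (f y) ∧
      f (twistMul β br x y) = twistMul β' br' (f x) (f y)) :=
  ⟨⟨hμ.twistMul hβ, hbr.twistMul hβ, hNov.twistMul hβμ, hLie.twistMul hβbr,
    hGD.twistMul hβμ hβbr⟩, fun x y ↦ ⟨map_twistMul hfμ hfβ x y, map_twistMul hfbr hfβ x y⟩⟩

end YauTwist

/-- the Yau twist of a Gelfand-Dorfman color algebra along a morphism
`α` is a Hom-Gelfand-Dorfman color Hom-algebra; moreover a morphism `f` of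
Gelfand-Dorfman color algebras intertwining the twisting morphisms is a morphism of
the Yau twists. -/
theorem yauTwist_gelfandDorfman
    {K Γ A A' : Type*} [Field K] [AddCommGroup Γ]
    [AddCommGroup A] [Module K A] [AddCommGroup A'] [Module K A']
    (𝒜 : Γ → Submodule K A) (𝒜' : Γ → Submodule K A') (ε : Γ → Γ → K)
    (μ br : A →ₗ[K] A →ₗ[K] A) (α : A →ₗ[K] A)
    (μ' br' : A' →ₗ[K] A' →ₗ[K] A') (α' : A' →ₗ[K] A') (f : A →ₗ[K] A')
    (hε : IsCommFactor ε)
    (hμ : GradedMul 𝒜 μ) (hbr : GradedMul 𝒜 br)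
    (hNov : IsHomNovikov 𝒜 ε μ (LinearMap.id))
    (hLie : IsHomLie 𝒜 ε br (LinearMap.id))
    (hGD : GDCompat 𝒜 ε μ br (LinearMap.id))
    (hα : GradedEnd 𝒜 α)
    (hαμ : ∀ x y : A, α (μ x y) = μ (α x) (α y))
    (hαbr : ∀ x y : A, α (br x y) = br (α x) (α y))
    (hα'μ : ∀ x y : A', α' (μ' x y) = μ' (α' x) (α' y))
    (hα'br : ∀ x y : A', α' (br' x y) = br' (α' x) (α' y))
    (hf : ∀ ⦃γ : Γ⦄ ⦃x : A⦄, x ∈ 𝒜 γ → f x ∈ 𝒜' γ)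
    (hfμ : ∀ x y : A, f (μ x y) = μ' (f x) (f y))
    (hfbr : ∀ x y : A, f (br x y) = br' (f x) (f y))
    (hfα : ∀ x : A, f (α x) = α' (f x)) :
    (GradedMul 𝒜 (twistMul α μ) ∧ GradedMul 𝒜 (twistMul α br) ∧
     IsHomNovikov 𝒜 ε (twistMul α μ) α ∧
     IsHomLie 𝒜 ε (twistMul α br) α ∧
     GDCompat 𝒜 ε (twistMul α μ) (twistMul α br) α) ∧
    (∀ x y : A,
      f (twistMul α μ x y) = twistMul α' μ' (f x) (f y) ∧
      f (twistMul α br x y) = twistMul α' br' (f x) (f y)) := by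
  simpa only [LinearMap.comp_id] using
    yauTwist_gelfandDorfman_general hμ hbr hNov hLie hGD hα hαμ hαbr hfμ hfbr hfα
end
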